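/- arXiv:2411.06763 — 2 statements merged into one kernel-verified Lean document; each statement's English description precedes it below -/
import Mathlib

section
/- Let r ∈ ℚ² and let A, B ∈ Γ_r. Then κ(AB, r) = κ(A, Br) · κ(B, r), where Br denotes the matrix-vector product of B with the column vector r. -/
/-!
Put `f(r) = r₂ - r₁ r₂`. Since `det A = 1`, the product of the coordinates of `Ar` is
`a c r₁² + (1 + 2 b c) r₁ r₂ + b d r₂²`, so `κ(A, r) = e((f(Ar) - f(r)) / 2)`. Thus `κ` is a
coboundary, and the cocycle relation is the telescoping
`f(ABr) - f(r) = (f(ABr) - f(Br)) + (f(Br) - f(r))`. Only the determinant conditions in `Γ_r`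
are needed for this.
-/

open Complex

/-- `e(z) = exp(2πiz)`. -/
noncomputable def ee (z : ℂ) : ℂ := Complex.exp (2 * Real.pi * Complex.I * z)

/-- The multiplier `κ(A, r)` for `A = [[a,b],[c,d]]` and `r ∈ ℚ²`. -/
noncomputable def kappa (a b c d : ℤ) (r : ℚ × ℚ) : ℂ :=
  ee ((1/2) * ((c : ℂ) * (r.1 : ℂ) + ((d : ℂ) - 1) * (r.2 : ℂ)
    - (a : ℂ) * (c : ℂ) * (r.1 : ℂ)^2
    - 2 * (b : ℂ) * (c : ℂ) * (r.1 : ℂ) * (r.2 : ℂ)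
    - (b : ℂ) * (d : ℂ) * (r.2 : ℂ)^2))

/-- Membership of `[[a,b],[c,d]]` in the congruence group `Γ_r`: determinant one
and `Ar − r ∈ ℤ²`. -/
def inGamma (r : ℚ × ℚ) (a b c d : ℤ) : Prop :=
  a * d - b * c = 1 ∧ (∃ m : ℤ, (a : ℚ) * r.1 + (b : ℚ) * r.2 - r.1 = m)
    ∧ (∃ n : ℤ, (c : ℚ) * r.1 + (d : ℚ) * r.2 - r.2 = n)

/-- For `det A = 1`, `κ(A, r)` is the coboundary `e((f(Ar) - f(r)) / 2)`, `f(r) = r₂ - r₁ r₂`. -/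
lemma kappa_eq_coboundary (a b c d : ℤ) (r : ℚ × ℚ) (h : a * d - b * c = 1) :
    kappa a b c d r = ee ((1/2) *
      ((((c : ℂ) * r.1 + d * r.2) - ((a : ℂ) * r.1 + b * r.2) * ((c : ℂ) * r.1 + d * r.2))
        - ((r.2 : ℂ) - r.1 * r.2))) := by
  have h' : (a : ℂ) * d - b * c = 1 := by exact_mod_cast h
  unfold kappa
  congr 1
  linear_combination (1/2) * (r.1 : ℂ) * r.2 * h'

lemma ee_add (z w : ℂ) : ee (z + w) = ee z * ee w := by
  simp only [ee, mul_add, Complex.exp_add]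

/-- The cocycle property `κ(AB, r) = κ(A, Br) κ(B, r)` for `A, B ∈ Γ_r`. -/
theorem kappa_cocycle (r : ℚ × ℚ) (a b c d a' b' c' d' : ℤ)
    (hA : inGamma r a b c d) (hB : inGamma r a' b' c' d') :
    kappa (a*a'+b*c') (a*b'+b*d') (c*a'+d*c') (c*b'+d*d') r
      = kappa a b c d ((a' : ℚ) * r.1 + (b' : ℚ) * r.2, (c' : ℚ) * r.1 + (d' : ℚ) * r.2)
        * kappa a' b' c' d' r := by
  have hdet : (a*a'+b*c') * (c*b'+d*d') - (a*b'+b*d') * (c*a'+d*c') = 1 := by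
    linear_combination (a' * d' - b' * c') * hA.1 + hB.1
  rw [kappa_eq_coboundary _ _ _ _ _ hdet, kappa_eq_coboundary _ _ _ _ _ hA.1,
    kappa_eq_coboundary _ _ _ _ _ hB.1, ← ee_add]
  congr 1
  push_cast
  ring
end

section
/- Let r = (r₁,r₂) ∈ ℚ², let a, b, d ∈ ℤ with a > 0, d > 0 and 0 ≤ b < a, and let τ ∈ ℍ. Then ϖ_r((aτ+b)/d) = ∏_{j=0}^{a−1} ∏_{ℓ=0}^{d−1} ϖ_{s(j,ℓ)}(τ), where s(j,ℓ) := ( (d(j+r₁) − b(ℓ+r₂))/(ad), (ℓ+r₂)/d ) is the image of the column vector (j+r₁, ℓ+r₂) under the inverse of the matrix [[a,b],[0,d]]. -/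
/-!
Write `σ = (aτ + b)/d`. The `n`-th factor of `ϖ_r(σ)`, for `n = kd + ℓ` with `0 ≤ ℓ < d`, is
`1 - e((n + r₂)σ - r₁)`, and `(n + r₂)σ - r₁` equals `a` times the exponent
`(k + s₂)τ - s₁` (with `s = s(0, ℓ)`) up to the integer `bk`. Changing `j` shifts `s₁` by `j/a`, so
the factorization `1 - e(az) = ∏_{j < a} (1 - e(z - j/a))` over the `a`-th roots of unity
(`one_sub_ee_mul`) splits this factor into the `k`-th factors of the `ϖ_{s(j,ℓ)}(τ)`
(`one_sub_ee_term`). Each product is absolutely convergent, being of the form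
`∏ (1 - c qᵏ)` with `|q| < 1` (`multipliable_varpiChar`), which justifies regrouping the factors
by the residue `ℓ` of `n` modulo `d` and exchanging the infinite product with the product over `j`.
-/

open Complex

/-- The q-Pochhammer symbol with characteristics:
`ϖ_r(τ) = ∏_{k≥0} (1 − e((k+r₂)τ − r₁))`. -/
noncomputable def varpiChar (r : ℚ × ℚ) (τ : ℂ) : ℂ :=
  ∏' k : ℕ, (1 - ee (((k : ℂ) + (r.2 : ℂ)) * τ - (r.1 : ℂ)))

lemma ee_nat_mul (n : ℕ) (z : ℂ) : ee (n * z) = ee z ^ n := by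
  rw [ee, ee, ← Complex.exp_nat_mul]
  ring_nf

lemma ee_int (n : ℤ) : ee n = 1 := by
  rw [ee, mul_comm]
  exact Complex.exp_int_mul_two_pi_mul_I n

lemma norm_ee_lt_one {σ : ℂ} (hσ : 0 < σ.im) : ‖ee σ‖ < 1 :=
  UpperHalfPlane.norm_exp_two_pi_I_lt_one ⟨σ, hσ⟩

/-- The factors of `ϖ_r(σ)` differ from `1` by terms of a geometric series of ratio `e(σ)`. -/
lemma multipliable_varpiChar (r : ℚ × ℚ) {σ : ℂ} (hσ : 0 < σ.im) :
    Multipliable fun k : ℕ => 1 - ee (((k : ℂ) + (r.2 : ℂ)) * σ - (r.1 : ℂ)) := by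
  have hterm (k : ℕ) : ee (((k : ℂ) + (r.2 : ℂ)) * σ - (r.1 : ℂ))
      = ee σ ^ k * ee (r.2 * σ - r.1) := by
    rw [← ee_nat_mul, ← ee_add]
    ring_nf
  simp only [hterm, sub_eq_add_neg (1 : ℂ)]
  apply multipliable_one_add_of_summable
  simp only [norm_neg, norm_mul, norm_pow]
  exact (summable_geometric_of_lt_one (norm_nonneg _) (norm_ee_lt_one hσ)).mul_right _

lemma isPrimitiveRoot_ee {a : ℕ} (ha : 0 < a) : IsPrimitiveRoot (ee (-1 / a)) a := by
  have h := (Complex.isPrimitiveRoot_exp a ha.ne').inv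
  rw [← Complex.exp_neg] at h
  have heq : ee (-1 / a) = Complex.exp (-(2 * Real.pi * Complex.I / a)) := by
    rw [ee]
    ring_nf
  rwa [heq]

/-- The factorization of `1 - Xᵃ` over the `a`-th roots of unity, evaluated at `X = e(z)`. -/
lemma one_sub_ee_mul {a : ℕ} (ha : 0 < a) (z : ℂ) :
    1 - ee (a * z) = ∏ j ∈ Finset.range a, (1 - ee (z - j / a)) := by
  have hζ := isPrimitiveRoot_ee ha
  have h := hζ.pow_sub_pow_eq_prod_sub_mul 1 (ee z) ha
  rw [one_pow] at h
  rw [ee_nat_mul, h]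
  symm
  refine Finset.prod_bij (fun j _ => ee (-1 / a) ^ j) ?_ ?_ ?_ ?_
  · intro j _
    rw [Polynomial.mem_nthRootsFinset ha, ← pow_mul, mul_comm, pow_mul, hζ.pow_eq_one, one_pow]
  · intro i hi j hj hij
    exact hζ.pow_inj (Finset.mem_range.1 hi) (Finset.mem_range.1 hj) hij
  · intro ξ hξ
    rw [Polynomial.mem_nthRootsFinset ha] at hξ
    have : NeZero a := ⟨ha.ne'⟩
    obtain ⟨j, hj, rfl⟩ := hζ.eq_pow_of_pow_eq_one hξ
    exact ⟨j, Finset.mem_range.2 hj, rfl⟩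
  · intro j _
    rw [← ee_nat_mul, ← ee_add]
    ring_nf

/-- The factor of index `kd + ℓ` on the left is the product over `j` of the factors of index `k`
of the `ϖ_{s(j,ℓ)}(τ)`. -/
lemma one_sub_ee_term (r : ℚ × ℚ) {a d : ℕ} (b : ℤ) (ha : 0 < a) (hd : 0 < d) (τ : ℂ) (k ℓ : ℕ) :
    1 - ee ((((k * d + ℓ : ℕ) : ℂ) + (r.2 : ℂ)) * (((a : ℂ) * τ + (b : ℂ)) / (d : ℂ)) - (r.1 : ℂ))
      = ∏ j ∈ Finset.range a, (1 - ee (((k : ℂ) + ((((ℓ : ℚ) + r.2) / (d : ℚ) : ℚ) : ℂ)) * τ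
          - ((((d : ℚ) * ((j : ℚ) + r.1) - (b : ℚ) * ((ℓ : ℚ) + r.2)) / ((a : ℚ) * (d : ℚ)) : ℚ)
            : ℂ))) := by
  have ha' : (a : ℂ) ≠ 0 := by exact_mod_cast ha.ne'
  have hd' : (d : ℂ) ≠ 0 := by exact_mod_cast hd.ne'
  have hsplit : (((k * d + ℓ : ℕ) : ℂ) + (r.2 : ℂ)) * (((a : ℂ) * τ + (b : ℂ)) / (d : ℂ)) - (r.1 : ℂ)
      = a * ((k + (ℓ + r.2) / d) * τ - (d * r.1 - b * (ℓ + r.2)) / (a * d)) + ((b * k : ℤ) : ℂ) := by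
    push_cast
    field_simp
    ring
  rw [hsplit, ee_add, ee_int, mul_one, one_sub_ee_mul ha]
  refine Finset.prod_congr rfl fun j _ => ?_
  congr 2
  push_cast
  field_simp
  ring

/-- Decomposition of `ϖ_r((aτ+b)/d)` as a product of `ϖ_{s(j,ℓ)}(τ)`, where
`s(j,ℓ)` is the image of `(j+r₁, ℓ+r₂)` under the inverse of `[[a,b],[0,d]]`. -/
theorem varpiChar_upper_triangular (r : ℚ × ℚ) (a d : ℕ) (b : ℤ)
    (ha : 0 < a) (hd : 0 < d) (hb0 : 0 ≤ b) (hba : b < (a : ℤ))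
    (τ : ℂ) (hτ : 0 < τ.im) :
    varpiChar r (((a : ℂ) * τ + (b : ℂ)) / (d : ℂ))
      = ∏ j ∈ Finset.range a, ∏ ℓ ∈ Finset.range d,
          varpiChar
            (((d : ℚ) * ((j : ℚ) + r.1) - (b : ℚ) * ((ℓ : ℚ) + r.2)) / ((a : ℚ) * (d : ℚ)),
              ((ℓ : ℚ) + r.2) / (d : ℚ)) τ := by
  have : NeZero d := ⟨hd.ne'⟩
  have hσ : 0 < (((a : ℂ) * τ + (b : ℂ)) / (d : ℂ)).im := by
    rw [Complex.div_natCast_im]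
    simp only [Complex.add_im, Complex.mul_im, Complex.natCast_re, Complex.natCast_im,
      Complex.intCast_im, zero_mul, add_zero]
    positivity
  -- Reindex by `(ℓ, k) ↦ kd + ℓ`.
  let e : Fin d × ℕ ≃ ℕ := (Equiv.prodComm _ _).trans (Nat.divModEquiv d).symm
  have he (ℓ : Fin d) (k : ℕ) : e (ℓ, k) = k * d + ℓ := rfl
  have hM := multipliable_varpiChar r hσ
  rw [varpiChar, ← e.tprod_eq]
  have hfib (ℓ j : ℕ) := multipliable_varpiChar
    (((d : ℚ) * ((j : ℚ) + r.1) - (b : ℚ) * ((ℓ : ℚ) + r.2)) / ((a : ℚ) * (d : ℚ)),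
      ((ℓ : ℚ) + r.2) / (d : ℚ)) hτ
  have hM' := e.multipliable_iff.2 hM
  simp only [Function.comp_def] at hM'
  rw [hM'.tprod_prod']
  · rw [tprod_fintype, Finset.prod_comm, Finset.prod_range]
    refine Finset.prod_congr rfl fun ℓ _ => ?_
    simp only [he, one_sub_ee_term r b ha hd]
    exact Multipliable.tprod_finsetProd fun j _ => hfib ℓ j
  · intro ℓ
    simp only [he, one_sub_ee_term r b ha hd]
    exact multipliable_prod fun j _ => hfib ℓ j
end
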